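/- Let α, β ∈ ℂ with real parts α_r, β_r and imaginary parts α_i, β_i. Then for all f, g ∈ L²(ℝ, ℂ), the function z ↦ ⟨f, η(·; z+α)⟩·⟨η(·; z + conj(β)), g⟩ is integrable over ℂ and (1/π)·∫_ℂ ⟨f, η(·; z+α)⟩·⟨η(·; z + conj(β)), g⟩ dz = e^{−(α_r − β_r)²/2} · ∫_ℝ conj(f(x))·g(x)·e^{i·√2·(α_i + β_i)·x} dx. In particular this equals ⟨f, g⟩ for all f, g if and only if conj(β) = α, so for conj(β) ≠ α the displaced bi-coherent family does not resolve the identity. -/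

import Mathlib

open MeasureTheory
open scoped ComplexConjugate

/-- The coherent-state wavefunction
`η(x;z) = π^{-1/4} exp(-x²/2 + √2 z x - (Re z)²)`. -/
noncomputable def eta (z : ℂ) : ℝ → ℂ := fun x =>
  ((Real.pi ^ (-(1 / 4 : ℝ)) : ℝ) : ℂ) *
    Complex.exp (-(x : ℂ) ^ 2 / 2 + ((Real.sqrt 2 : ℝ) : ℂ) * z * x - (z.re : ℂ) ^ 2)

open scoped FourierTransform InnerProductSpace SchwartzMap

/-!
Up to a phase, `η(·; z + w)` is the real window `η(·; Re w)` translated by `√2 Re z` and modulated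
at frequency `Im z / (√2 π)`, so `z ↦ ⟨η(·; z + w), f⟩` is a short-time Fourier transform of a
modulated copy of `f`, read in rescaled phase-space coordinates `z ↦ (√2 Re z, Im z / (√2 π))`;
their Jacobian `1 / π` is the normalisation of the coherent-state measure. Moyal's orthogonality
relations (Plancherel in frequency, then Fubini in position) split the integral of a product of two
such transforms into the inner product of the windows, which gives the damping factor, and the inner
product of the modulated functions, which gives the plane wave. Testing on `η(·; 0)`, where the
right-hand side equals `exp (-‖α - conj β‖² / 2)`, shows that the identity is resolved only for
`conj β = α`.
-/

section Fourier

variable {V H : Type*} [NormedAddCommGroup V] [InnerProductSpace ℝ V] [FiniteDimensional ℝ V]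
  [MeasurableSpace V] [BorelSpace V] [NormedAddCommGroup H] [InnerProductSpace ℂ H]
  [CompleteSpace H] {u v : V → H}

/- Both sides have the same integral against every test function: on the left because the `L²`
Fourier transform extends to tempered distributions, on the right by Fubini. -/
theorem coeFn_fourier_toLp_ae_eq (hu : Integrable u) (hu₂ : MemLp u 2) :
    (𝓕 (hu₂.toLp u) : Lp H 2 (volume : Measure V)) =ᵐ[volume] 𝓕 u := by
  have hinner : Continuous fun p : V × V => innerₗ V p.1 p.2 := continuous_inner
  have hcont : Continuous (𝓕 u) :=
    VectorFourier.fourierIntegral_continuous Real.continuous_fourierChar hinner hu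
  refine ae_eq_of_integral_contDiff_smul_eq ((Lp.memLp _).locallyIntegrable one_le_two)
    hcont.locallyIntegrable fun g hg hg_supp => ?_
  let G : 𝓢(V, ℂ) := (hg_supp.comp_left Complex.ofReal_zero).toSchwartzMap
    (Complex.ofRealCLM.contDiff.comp hg)
  have hdistr := congrArg (fun T => T G) (Lp.fourier_toTemperedDistribution_eq (hu₂.toLp u))
  simp only [TemperedDistribution.fourier_apply, Lp.toTemperedDistribution_apply] at hdistr
  calc ∫ x, g x • (𝓕 (hu₂.toLp u) : Lp H 2 (volume : Measure V)) x
      = ∫ x, G x • (𝓕 (hu₂.toLp u) : Lp H 2 (volume : Measure V)) x := rfl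
    _ = ∫ x, (𝓕 G) x • hu₂.toLp u x := hdistr.symm
    _ = ∫ x, (𝓕 (G : V → ℂ)) x • u x := by
      refine integral_congr_ae ?_
      filter_upwards [hu₂.coeFn_toLp] with x hx
      rw [hx, SchwartzMap.fourier_coe]
    _ = ∫ x, G x • 𝓕 u x := by
      simpa [flip_innerₗ] using! VectorFourier.integral_fourierIntegral_smul_eq_flip
        (μ := volume) (ν := volume) Real.continuous_fourierChar hinner G.integrable hu
    _ = ∫ x, g x • 𝓕 u x := rfl

theorem memLp_two_fourier (hu : Integrable u) (hu₂ : MemLp u 2) : MemLp (𝓕 u) 2 :=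
  (memLp_congr_ae (coeFn_fourier_toLp_ae_eq hu hu₂)).1 (Lp.memLp _)

theorem integral_inner_fourier (hu : Integrable u) (hu₂ : MemLp u 2)
    (hv : Integrable v) (hv₂ : MemLp v 2) :
    ∫ ξ, ⟪𝓕 u ξ, 𝓕 v ξ⟫_ℂ = ∫ x, ⟪u x, v x⟫_ℂ := by
  have hLp := Lp.inner_fourier_eq (hu₂.toLp u) (hv₂.toLp v)
  rw [L2.inner_def, L2.inner_def] at hLp
  calc ∫ ξ, ⟪𝓕 u ξ, 𝓕 v ξ⟫_ℂ = _ := integral_congr_ae ?_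
    _ = _ := hLp
    _ = ∫ x, ⟪u x, v x⟫_ℂ := integral_congr_ae ?_
  · filter_upwards [coeFn_fourier_toLp_ae_eq hu hu₂, coeFn_fourier_toLp_ae_eq hv hv₂] with ξ h₁ h₂
    rw [h₁, h₂]
  · filter_upwards [hu₂.coeFn_toLp, hv₂.coeFn_toLp] with x h₁ h₂
    rw [h₁, h₂]

theorem integral_norm_sq_fourier (hu : Integrable u) (hu₂ : MemLp u 2) :
    ∫ ξ, ‖𝓕 u ξ‖ ^ 2 = ∫ x, ‖u x‖ ^ 2 := by
  have h := integral_inner_fourier hu hu₂ hu hu₂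
  simp_rw [inner_self_eq_norm_sq_to_K (𝕜 := ℂ), ← RCLike.ofReal_pow] at h
  exact_mod_cast (integral_ofReal.symm.trans h).trans integral_ofReal

end Fourier

section Translates

variable {G 𝕜 : Type*} [AddGroup G] [MeasurableSpace G] [MeasurableAdd₂ G] [MeasurableNeg G]
  {μ : Measure G} [SFinite μ] [μ.IsAddRightInvariant] [μ.IsNegInvariant] [RCLike 𝕜] {h k : G → 𝕜}

theorem integrable_mul_comp_sub (hh : Integrable h μ) (hk : Integrable k μ) :
    Integrable (fun p : G × G => h p.2 * k (p.2 - p.1)) (μ.prod μ) := by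
  simpa using! hh.convolution_integrand (ContinuousLinearMap.mul 𝕜 𝕜) hk.comp_neg

theorem integral_integral_mul_comp_sub (hh : Integrable h μ) (hk : Integrable k μ) :
    ∫ a, ∫ x, h x * k (x - a) ∂μ ∂μ = (∫ x, h x ∂μ) * ∫ y, k y ∂μ := by
  simpa [convolution, integral_neg_eq_self k] using
    integral_convolution (ContinuousLinearMap.mul 𝕜 𝕜) hh hk.comp_neg

end Translates

theorem integrable_inner_of_memLp_two {X 𝕜 H : Type*} [MeasurableSpace X] {μ : Measure X}
    [RCLike 𝕜] [NormedAddCommGroup H] [InnerProductSpace 𝕜 H] {f g : X → H}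
    (hf : MemLp f 2 μ) (hg : MemLp g 2 μ) : Integrable (fun x => ⟪f x, g x⟫_𝕜) μ := by
  refine (L2.integrable_inner (𝕜 := 𝕜) (hf.toLp f) (hg.toLp g)).congr ?_
  filter_upwards [hf.coeFn_toLp, hg.coeFn_toLp] with x hx_f hx_g
  rw [hx_f, hx_g]

section ShortTimeFourier

variable {V H : Type*} [NormedAddCommGroup H] [InnerProductSpace ℂ H]

/-- The function `f` seen through the conjugate of the window `φ` centred at `a`; its Fourier
transform is a slice of the short-time Fourier transform. -/
def windowed [Sub V] (φ : V → ℂ) (f : V → H) (a x : V) : H := conj (φ (x - a)) • f x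

theorem inner_windowed [Sub V] (φ ψ : V → ℂ) (f g : V → H) (a x : V) :
    ⟪windowed φ f a x, windowed ψ g a x⟫_ℂ =
      ⟪f x, g x⟫_ℂ * ⟪ψ (x - a), φ (x - a)⟫_ℂ := by
  rw [windowed, windowed, inner_smul_left, inner_smul_right, Complex.conj_conj,
    RCLike.inner_apply]
  ring

theorem norm_windowed_sq [Sub V] (φ : V → ℂ) (f : V → H) (a x : V) :
    ‖windowed φ f a x‖ ^ 2 = ‖f x‖ ^ 2 * ‖φ (x - a)‖ ^ 2 := by
  rw [windowed, norm_smul, RCLike.norm_conj, mul_pow, mul_comm]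

variable [NormedAddCommGroup V] [InnerProductSpace ℝ V] [FiniteDimensional ℝ V]
  [MeasurableSpace V] [BorelSpace V] {φ ψ : V → ℂ} {f g : V → H}

theorem aestronglyMeasurable_windowed (hφ : AEStronglyMeasurable φ)
    (hf : AEStronglyMeasurable f) :
    AEStronglyMeasurable fun p : V × V => windowed φ f p.1 p.2 := by
  have hsub : Measure.QuasiMeasurePreserving fun p : V × V => p.2 - p.1 :=
    (quasiMeasurePreserving_sub volume volume).comp
      Measure.measurePreserving_swap.quasiMeasurePreserving
  exact (Complex.continuous_conj.comp_aestronglyMeasurable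
    (hφ.comp_quasiMeasurePreserving hsub)).smul hf.comp_snd

theorem integrable_windowed (hφ : MemLp φ 2) (hf : MemLp f 2) (a : V) :
    Integrable (windowed φ f a) :=
  memLp_one_iff_integrable.1 <|
    hf.smul (hφ.comp_measurePreserving (measurePreserving_sub_right volume a)).star

theorem integrable_norm_sq_windowed (hφ : MemLp φ 2) (hf : MemLp f 2) :
    Integrable fun p : V × V => ‖windowed φ f p.1 p.2‖ ^ 2 := by
  simp_rw [norm_windowed_sq]
  exact integrable_mul_comp_sub (hf.integrable_norm_pow two_ne_zero)
    (hφ.integrable_norm_pow two_ne_zero)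

theorem ae_memLp_two_windowed (hφ : MemLp φ 2) (hf : MemLp f 2) :
    ∀ᵐ a, MemLp (windowed φ f a) 2 := by
  filter_upwards [(integrable_norm_sq_windowed hφ hf).prod_right_ae] with a ha
  exact (memLp_two_iff_integrable_sq_norm (integrable_windowed hφ hf a).aestronglyMeasurable).2 ha

/-- The short-time Fourier transform of `f` with window `φ`, as a function of the pair
`p = (position, frequency)`; frequencies follow the convention of `𝓕`, with kernel
`exp (-2πi ⟪x, ξ⟫)`. -/
noncomputable def shortTimeFourier (φ : V → ℂ) (f : V → H) (p : V × V) : H :=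
  𝓕 (windowed φ f p.1) p.2

theorem aestronglyMeasurable_shortTimeFourier (hφ : AEStronglyMeasurable φ)
    (hf : AEStronglyMeasurable f) : AEStronglyMeasurable (shortTimeFourier φ f) := by
  have hphase : Continuous fun q : (V × V) × V => Real.fourierChar (-⟪q.2, q.1.2⟫_ℝ) := by
    fun_prop
  have hproj : Measure.QuasiMeasurePreserving fun q : (V × V) × V => (q.1.1, q.2) :=
    QuasiMeasurePreserving.prodMap Measure.quasiMeasurePreserving_fst (.id volume)
  exact (hphase.aestronglyMeasurable.smul
    ((aestronglyMeasurable_windowed hφ hf).comp_quasiMeasurePreserving hproj)).integral_prod_right'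

variable [CompleteSpace H]

theorem memLp_two_shortTimeFourier (hφ : MemLp φ 2) (hf : MemLp f 2) :
    MemLp (shortTimeFourier φ f) 2 := by
  have hmeas := aestronglyMeasurable_shortTimeFourier hφ.1 hf.1
  rw [memLp_two_iff_integrable_sq_norm hmeas, Measure.volume_eq_prod,
    integrable_prod_iff (by exact hmeas.norm.pow 2)]
  constructor
  · filter_upwards [ae_memLp_two_windowed hφ hf] with a ha
    exact (memLp_two_fourier (integrable_windowed hφ hf a) ha).integrable_norm_pow two_ne_zero
  · refine (integrable_norm_sq_windowed hφ hf).integral_prod_left.congr ?_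
    filter_upwards [ae_memLp_two_windowed hφ hf] with a ha
    simp_rw [Real.norm_of_nonneg (sq_nonneg ‖_‖)]
    exact (integral_norm_sq_fourier (integrable_windowed hφ hf a) ha).symm

theorem integral_inner_shortTimeFourier (hφ : MemLp φ 2) (hψ : MemLp ψ 2) (hf : MemLp f 2)
    (hg : MemLp g 2) :
    ∫ p, ⟪shortTimeFourier φ f p, shortTimeFourier ψ g p⟫_ℂ =
      (∫ x, ⟪f x, g x⟫_ℂ) * ∫ y, ⟪ψ y, φ y⟫_ℂ := by
  have hslice : ∀ᵐ a, ∫ ξ, ⟪shortTimeFourier φ f (a, ξ), shortTimeFourier ψ g (a, ξ)⟫_ℂ =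
      ∫ x, ⟪windowed φ f a x, windowed ψ g a x⟫_ℂ := by
    filter_upwards [ae_memLp_two_windowed hφ hf, ae_memLp_two_windowed hψ hg] with a hfa hga
    exact integral_inner_fourier (integrable_windowed hφ hf a) hfa (integrable_windowed hψ hg a) hga
  calc ∫ p, ⟪shortTimeFourier φ f p, shortTimeFourier ψ g p⟫_ℂ
      = ∫ a, ∫ ξ, ⟪shortTimeFourier φ f (a, ξ), shortTimeFourier ψ g (a, ξ)⟫_ℂ :=
        integral_prod _ (integrable_inner_of_memLp_two (memLp_two_shortTimeFourier hφ hf)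
          (memLp_two_shortTimeFourier hψ hg))
    _ = ∫ a, ∫ x, ⟪windowed φ f a x, windowed ψ g a x⟫_ℂ := integral_congr_ae hslice
    _ = ∫ a, ∫ x, ⟪f x, g x⟫_ℂ * ⟪ψ (x - a), φ (x - a)⟫_ℂ := by simp_rw [inner_windowed]
    _ = (∫ x, ⟪f x, g x⟫_ℂ) * ∫ y, ⟪ψ y, φ y⟫_ℂ :=
      integral_integral_mul_comp_sub (integrable_inner_of_memLp_two hf hg)
        (integrable_inner_of_memLp_two hψ hφ)

end ShortTimeFourier

section CoherentStates

theorem conj_eta_mul_eta (w z : ℂ) (x : ℝ) : conj (eta w x) * eta z x =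
    ((Real.pi ^ (-(1 / 2) : ℝ) : ℝ) : ℂ) * Complex.exp (-1 * (x : ℂ) ^ 2 +
      (√2 : ℝ) * (z + conj w) * x + (-(w.re : ℂ) ^ 2 - (z.re : ℂ) ^ 2)) := by
  have hpi : Real.pi ^ (-(1 / 2) : ℝ) = Real.pi ^ (-(1 / 4) : ℝ) * Real.pi ^ (-(1 / 4) : ℝ) := by
    rw [← Real.rpow_add Real.pi_pos]
    norm_num
  simp only [eta, map_mul, ← Complex.exp_conj, map_add, map_sub, map_div₀, map_neg, map_pow,
    Complex.conj_ofReal, map_ofNat]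
  rw [mul_mul_mul_comm, ← Complex.exp_add, hpi, Complex.ofReal_mul]
  ring_nf

theorem integrable_conj_eta_mul_eta (w z : ℂ) : Integrable fun x => conj (eta w x) * eta z x := by
  simp_rw [conj_eta_mul_eta]
  exact (integrable_cexp_quadratic' (by simp) _ _).const_mul _

theorem integral_conj_eta_mul_eta (w z : ℂ) : ∫ x, conj (eta w x) * eta z x =
    Complex.exp ((z + conj w) ^ 2 / 2 - (w.re : ℂ) ^ 2 - (z.re : ℂ) ^ 2) := by
  have hsqrt : ((√2 : ℝ) : ℂ) ^ 2 = 2 := mod_cast Real.sq_sqrt zero_le_two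
  have hpi : ((Real.pi ^ (-(1 / 2) : ℝ) : ℝ) : ℂ) * ((Real.pi : ℂ) / -(-1)) ^ (1 / 2 : ℂ) = 1 := by
    rw [neg_neg, div_one, Complex.ofReal_cpow Real.pi_pos.le,
      ← Complex.cpow_add _ _ (mod_cast Real.pi_ne_zero)]
    simp
  simp_rw [conj_eta_mul_eta]
  rw [integral_const_mul, integral_cexp_quadratic (by simp), ← mul_assoc, hpi, one_mul]
  congr 1
  linear_combination ((z + conj w) ^ 2 / 4) * hsqrt

theorem memLp_two_eta (z : ℂ) : MemLp (eta z) 2 := by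
  have hmeas : Continuous (eta z) := by
    unfold eta
    fun_prop
  rw [memLp_two_iff_integrable_sq_norm hmeas.aestronglyMeasurable]
  refine (integrable_conj_eta_mul_eta z z).re.congr (.of_forall fun x => ?_)
  simp [Complex.conj_mul', ← Complex.ofReal_pow]

theorem integral_inner_eta_ofReal (s t : ℝ) :
    ∫ x, ⟪eta t x, eta s x⟫_ℂ = Real.exp (-(s - t) ^ 2 / 2) := by
  simp_rw [RCLike.inner_apply, mul_comm (eta _ _), integral_conj_eta_mul_eta, Complex.conj_ofReal,
    Complex.ofReal_re]
  push_cast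
  ring_nf

/-- The plane wave `x ↦ exp (i √2 k x)` carried by a coherent state of imaginary part `k`; the
factor `√2` follows the normalisation of `eta`. -/
noncomputable def planeWave (k x : ℝ) : ℂ :=
  Complex.exp (Complex.I * (√2 : ℝ) * k * x)

theorem continuous_planeWave (k : ℝ) : Continuous (planeWave k) := by
  unfold planeWave
  fun_prop

theorem planeWave_zero (x : ℝ) : planeWave 0 x = 1 := by
  simp [planeWave]

theorem conj_planeWave (k x : ℝ) : conj (planeWave k x) = planeWave (-k) x := by
  simp [planeWave, ← Complex.exp_conj]

theorem planeWave_mul_planeWave (k l x : ℝ) :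
    planeWave k x * planeWave l x = planeWave (k + l) x := by
  rw [planeWave, planeWave, planeWave, ← Complex.exp_add]
  push_cast
  ring_nf

theorem norm_planeWave (k x : ℝ) : ‖planeWave k x‖ = 1 := by
  simp [planeWave, Complex.norm_exp]

theorem eta_add (z w : ℂ) (x : ℝ) :
    eta (z + w) x = planeWave (z.im + w.im) x * eta w.re (x - √2 * z.re) := by
  have hsqrt : ((√2 : ℝ) : ℂ) ^ 2 = 2 := mod_cast Real.sq_sqrt zero_le_two
  rw [eta, eta, planeWave, mul_left_comm, ← Complex.exp_add]
  congr 2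
  simp only [Complex.add_re, Complex.ofReal_re]
  push_cast
  linear_combination ((z.re : ℂ) ^ 2 / 2 + z.re * w.re) * hsqrt -
    (√2 : ℝ) * x * (Complex.re_add_im z + Complex.re_add_im w)

theorem fourierChar_neg_inner_eq_planeWave (b x : ℝ) :
    (Real.fourierChar (-⟪x, (√2 * Real.pi)⁻¹ * b⟫_ℝ) : ℂ) = planeWave (-b) x := by
  have hfreq : 2 * Real.pi * -((√2 * Real.pi)⁻¹ * b * x) = √2 * -b * x := by
    have hsqrt : √2 * √2 = 2 := Real.mul_self_sqrt zero_le_two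
    field_simp
    linear_combination (b * x) * hsqrt
  rw [Real.fourierChar_apply, planeWave, RCLike.inner_apply, conj_trivial, hfreq]
  push_cast
  ring_nf

/-- Removal of the plane wave `planeWave k` from `f`, that is, multiplication by its conjugate. -/
noncomputable def demodulate (k : ℝ) (f : ℝ → ℂ) (x : ℝ) : ℂ :=
  planeWave (-k) x * f x

theorem inner_demodulate (k l : ℝ) (f g : ℝ → ℂ) (x : ℝ) :
    ⟪demodulate k f x, demodulate l g x⟫_ℂ = conj (f x) * g x * planeWave (k - l) x := by
  rw [RCLike.inner_apply, demodulate, demodulate, map_mul, conj_planeWave, neg_neg,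
    sub_eq_add_neg, ← planeWave_mul_planeWave]
  ring

theorem memLp_two_demodulate (k : ℝ) {f : ℝ → ℂ} (hf : MemLp f 2) : MemLp (demodulate k f) 2 := by
  refine hf.of_le ((continuous_planeWave (-k)).aestronglyMeasurable.mul hf.1)
    (.of_forall fun x => ?_)
  rw [demodulate, norm_mul, norm_planeWave, one_mul]

/-- The rescaled phase-space coordinates `z ↦ (√2 Re z, Im z / (√2 π))`: the position of the
coherent state `eta z` and its frequency in the convention of `𝓕`. -/
noncomputable def phaseSpaceEquiv : ℂ ≃ᵐ ℝ × ℝ :=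
  Complex.measurableEquivRealProd.trans <|
    (Homeomorph.mulLeft₀ √2 (by positivity)).toMeasurableEquiv.prodCongr
      (Homeomorph.mulLeft₀ (√2 * Real.pi)⁻¹ (by positivity)).toMeasurableEquiv

theorem phaseSpaceEquiv_apply (z : ℂ) :
    phaseSpaceEquiv z = (√2 * z.re, (√2 * Real.pi)⁻¹ * z.im) := rfl

theorem measurePreserving_phaseSpaceEquiv :
    MeasurePreserving phaseSpaceEquiv volume (ENNReal.ofReal Real.pi • volume) := by
  have hjacobian : |(√2)⁻¹| * |(√2 * Real.pi)⁻¹⁻¹| = Real.pi := by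
    rw [abs_of_pos (by positivity), abs_of_pos (by positivity)]
    field_simp
  have hscale : MeasurePreserving (Prod.map (√2 * ·) ((√2 * Real.pi)⁻¹ * ·))
      (volume : Measure (ℝ × ℝ)) (ENNReal.ofReal Real.pi • volume) := by
    refine ⟨by fun_prop, ?_⟩
    rw [Measure.volume_eq_prod, ← Measure.map_prod_map _ _ (by fun_prop) (by fun_prop),
      Real.map_volume_mul_left (by positivity), Real.map_volume_mul_left (by positivity),
      Measure.prod_smul_left, Measure.prod_smul_right, smul_smul,
      ← ENNReal.ofReal_mul (abs_nonneg _), hjacobian]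
  exact hscale.comp Complex.volume_preserving_equiv_real_prod

theorem integral_comp_phaseSpaceEquiv {E : Type*} [NormedAddCommGroup E] [NormedSpace ℝ E]
    (F : ℝ × ℝ → E) : ∫ z, F (phaseSpaceEquiv z) = Real.pi • ∫ p, F p := by
  rw [measurePreserving_phaseSpaceEquiv.integral_comp', integral_smul_measure,
    ENNReal.toReal_ofReal Real.pi_pos.le]

/-- The coherent-state transform of `f` displaced by `w`, with value `⟨η(·; z + w), f⟩` at `z`. -/
noncomputable def coherentTransform (w : ℂ) (f : ℝ → ℂ) (z : ℂ) : ℂ :=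
  ∫ x, conj (eta (z + w) x) * f x

theorem coherentTransform_eq_shortTimeFourier (w : ℂ) (f : ℝ → ℂ) (z : ℂ) :
    coherentTransform w f z =
      shortTimeFourier (eta w.re) (demodulate w.im f) (phaseSpaceEquiv z) := by
  rw [shortTimeFourier, Real.fourier_eq, coherentTransform, phaseSpaceEquiv_apply]
  refine integral_congr_ae (.of_forall fun x => ?_)
  simp only [Circle.smul_def, fourierChar_neg_inner_eq_planeWave, windowed, demodulate, smul_eq_mul,
    eta_add, map_mul, conj_planeWave, ← planeWave_mul_planeWave]
  ring

variable {f g : ℝ → ℂ}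

theorem memLp_two_coherentTransform (w : ℂ) (hf : MemLp f 2) :
    MemLp (coherentTransform w f) 2 := by
  rw [funext (coherentTransform_eq_shortTimeFourier w f)]
  have hstft := memLp_two_shortTimeFourier (memLp_two_eta w.re) (memLp_two_demodulate w.im hf)
  exact (hstft.smul_measure ENNReal.ofReal_ne_top).comp_measurePreserving
    measurePreserving_phaseSpaceEquiv

theorem integral_conj_coherentTransform_mul (w v : ℂ) (hf : MemLp f 2) (hg : MemLp g 2) :
    ∫ z, conj (coherentTransform w f z) * coherentTransform v g z =
      Real.pi * (Real.exp (-(w.re - v.re) ^ 2 / 2) *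
        ∫ x, conj (f x) * g x * planeWave (w.im - v.im) x) := by
  calc ∫ z, conj (coherentTransform w f z) * coherentTransform v g z
      = ∫ z, ⟪shortTimeFourier (eta w.re) (demodulate w.im f) (phaseSpaceEquiv z),
          shortTimeFourier (eta v.re) (demodulate v.im g) (phaseSpaceEquiv z)⟫_ℂ := by
        simp_rw [coherentTransform_eq_shortTimeFourier, RCLike.inner_apply, mul_comm]
    _ = Real.pi • ∫ p, ⟪shortTimeFourier (eta w.re) (demodulate w.im f) p,
          shortTimeFourier (eta v.re) (demodulate v.im g) p⟫_ℂ :=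
        integral_comp_phaseSpaceEquiv fun p => ⟪shortTimeFourier (eta w.re) (demodulate w.im f) p,
          shortTimeFourier (eta v.re) (demodulate v.im g) p⟫_ℂ
    _ = Real.pi • ((∫ x, ⟪demodulate w.im f x, demodulate v.im g x⟫_ℂ) *
          ∫ y, ⟪eta v.re y, eta w.re y⟫_ℂ) := by
        rw [integral_inner_shortTimeFourier (memLp_two_eta _) (memLp_two_eta _)
          (memLp_two_demodulate _ hf) (memLp_two_demodulate _ hg)]
    _ = _ := by
        simp_rw [inner_demodulate, integral_inner_eta_ofReal, Complex.real_smul, mul_comm]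

theorem integral_conj_eta_zero_mul_eta_zero_mul_planeWave (k : ℝ) :
    ∫ x, conj (eta 0 x) * eta 0 x * planeWave k x = Real.exp (-k ^ 2 / 2) := by
  have hmodulate (x : ℝ) : eta 0 x * planeWave k x = eta (Complex.I * k) x := by
    rw [← add_zero (Complex.I * k), eta_add]
    simp [mul_comm]
  simp_rw [mul_assoc, hmodulate]
  rw [integral_conj_eta_mul_eta]
  simp [mul_pow]

theorem forall_exp_mul_integral_planeWave_eq_iff (r k : ℝ) :
    (∀ f g : Lp ℂ 2 (volume : Measure ℝ),
      Real.exp (-r ^ 2 / 2) * ∫ x, conj (f x) * g x * planeWave k x = ∫ x, conj (f x) * g x) ↔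
      r = 0 ∧ k = 0 := by
  constructor
  · intro h
    let f := (memLp_two_eta 0).toLp (eta 0)
    have hgauss (l : ℝ) : ∫ x, conj (f x) * f x * planeWave l x = Real.exp (-l ^ 2 / 2) := by
      rw [← integral_conj_eta_zero_mul_eta_zero_mul_planeWave]
      refine integral_congr_ae ?_
      filter_upwards [(memLp_two_eta 0).coeFn_toLp] with x hx
      rw [hx]
    have hnorm : ∫ x, conj (f x) * f x = 1 := by simpa [planeWave_zero] using hgauss 0
    have hdamp := h f f
    rw [hgauss, hnorm, ← Complex.ofReal_mul, ← Real.exp_add, Complex.ofReal_eq_one,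
      Real.exp_eq_one_iff] at hdamp
    constructor <;> nlinarith [sq_nonneg r, sq_nonneg k]
  · rintro ⟨rfl, rfl⟩ f g
    simp [planeWave_zero]

end CoherentStates

theorem stmt_12 (α β : ℂ) :
    (∀ f g : Lp ℂ 2 (volume : Measure ℝ),
      Integrable (fun z : ℂ =>
        (∫ x : ℝ, conj (f x) * eta (z + α) x) * (∫ x : ℝ, conj (eta (z + conj β) x) * g x))
        (volume : Measure ℂ) ∧
      ((1 / Real.pi : ℝ) : ℂ) *
          ∫ z : ℂ, (∫ x : ℝ, conj (f x) * eta (z + α) x) *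
            (∫ x : ℝ, conj (eta (z + conj β) x) * g x) =
        ((Real.exp (-(α.re - β.re) ^ 2 / 2) : ℝ) : ℂ) *
          ∫ x : ℝ, conj (f x) * g x *
            Complex.exp (Complex.I * ((Real.sqrt 2 : ℝ) : ℂ) * ((α.im : ℂ) + (β.im : ℂ)) * x)) ∧
    ((∀ f g : Lp ℂ 2 (volume : Measure ℝ),
        ((1 / Real.pi : ℝ) : ℂ) *
            ∫ z : ℂ, (∫ x : ℝ, conj (f x) * eta (z + α) x) *
              (∫ x : ℝ, conj (eta (z + conj β) x) * g x) =
          ∫ x : ℝ, conj (f x) * g x) ↔ conj β = α) := by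
  have hcoeff (f g : Lp ℂ 2 (volume : Measure ℝ)) (z : ℂ) :
      (∫ x, conj (f x) * eta (z + α) x) * (∫ x, conj (eta (z + conj β) x) * g x) =
        conj (coherentTransform α f z) * coherentTransform (conj β) g z := by
    rw [coherentTransform, coherentTransform, ← integral_conj]
    simp only [map_mul, Complex.conj_conj, mul_comm]
  have hwave (x : ℝ) :
      Complex.exp (Complex.I * (√2 : ℝ) * ((α.im : ℂ) + (β.im : ℂ)) * x) =
        planeWave (α.im + β.im) x := by
    rw [planeWave, Complex.ofReal_add]
  have hvalue (f g : Lp ℂ 2 (volume : Measure ℝ)) :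
      ((1 / Real.pi : ℝ) : ℂ) *
          ∫ z, conj (coherentTransform α f z) * coherentTransform (conj β) g z =
        Real.exp (-(α.re - β.re) ^ 2 / 2) *
          ∫ x, conj (f x) * g x * planeWave (α.im + β.im) x := by
    rw [integral_conj_coherentTransform_mul _ _ (Lp.memLp f) (Lp.memLp g), ← mul_assoc,
      ← Complex.ofReal_mul, one_div_mul_cancel Real.pi_ne_zero, Complex.ofReal_one, one_mul,
      Complex.conj_re, Complex.conj_im, sub_neg_eq_add]
  simp_rw [hcoeff, hwave, hvalue]
  refine ⟨fun f g => ⟨?_, trivial⟩, (forall_exp_mul_integral_planeWave_eq_iff _ _).trans ?_⟩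
  · exact (memLp_two_coherentTransform α (Lp.memLp f)).star.integrable_mul
      (memLp_two_coherentTransform (conj β) (Lp.memLp g))
  · simp only [Complex.ext_iff, Complex.conj_re, Complex.conj_im]
    grind
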